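/- Let z > 0 and let v (with v_j > 0 for all j, v_1 = 1) satisfy v_i ≥ L_{ij}(z) v_j for all i ≠ j. If the digraph D(v,z) with arcs {(i,j) : v_i = L_{ij}(z) v_j} contains no directed cycle, then there exists a feasible solution v' of the same system for which all inequalities v'_i > L_{ij}(z) v'_j are strict. -/

import Mathlib

theorem aux_wf {n : ℕ} (r : Fin n → Fin n → Prop) (hirr : ∀ i, ¬ r i i)
    (hac : ∀ (s : ℕ), 2 ≤ s → ∀ [NeZero s], ∀ c : Fin s → Fin n,
      Function.Injective c → ¬ ∀ k : Fin s, r (c k) (c (k + 1))) :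
    WellFounded (fun x y => r y x) := by
  rw [WellFounded.wellFounded_iff_has_min]
  rintro S ⟨x0, hx0⟩
  by_contra! hcon
  have hcon' : ∀ m : S, ∃ x : S, r m x := fun m => by
    obtain ⟨x, hx, h⟩ := hcon m m.2
    exact ⟨⟨x, hx⟩, h⟩
  choose f hf using hcon'
  obtain ⟨y, p, hp, hy⟩ : ∃ y : S, ∃ p, 0 < p ∧ Function.IsPeriodicPt f p y := by
    have h := not_injective_infinite_finite (fun k : ℕ => f^[k] ⟨x0, hx0⟩)
    have key : ∀ a b : ℕ, a < b → f^[a] ⟨x0, hx0⟩ = f^[b] ⟨x0, hx0⟩ →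
        ∃ y : S, ∃ p, 0 < p ∧ Function.IsPeriodicPt f p y := by
      intro a b hab he
      refine ⟨f^[a] ⟨x0, hx0⟩, b - a, by omega, ?_⟩
      unfold Function.IsPeriodicPt Function.IsFixedPt
      rw [← Function.iterate_add_apply, Nat.sub_add_cancel hab.le, he]
    simp only [Function.Injective, not_forall] at h
    obtain ⟨a, b, he, hne⟩ := h
    rcases lt_or_gt_of_ne hne with h | h
    · exact key a b h he
    · exact key b a h he.symm
  have hs := hy.minimalPeriod_pos hp
  have hper := Function.iterate_minimalPeriod (f := f) (x := y)
  have hmod := fun k => Function.iterate_mod_minimalPeriod_eq (f := f) (x := y) (n := k)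
  have hinj := Function.iterate_injOn_Iio_minimalPeriod (f := f) (x := y)
  generalize Function.minimalPeriod f y = s at hs hper hmod hinj
  have hs2 : 2 ≤ s := by
    by_contra hlt
    obtain rfl : s = 1 := by omega
    have := hf y
    simp only [Function.iterate_one] at hper
    rw [hper] at this
    exact hirr _ this
  haveI : NeZero s := ⟨by omega⟩
  refine hac s hs2 (fun k => (f^[k.val] y : S)) ?_ ?_
  · intro a b hab
    exact Fin.ext (hinj a.2 b.2 (Subtype.ext hab))
  · intro k
    have : f^[(k + 1 : Fin s).val] y = f (f^[k.val] y) := by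
      rw [Fin.val_add, Fin.val_one', Nat.add_mod_mod, hmod, Function.iterate_succ_apply']
    simp only [this]
    exact hf _

theorem aux_height {n : ℕ} (r : Fin n → Fin n → Prop)
    (hwf : WellFounded (fun x y => r y x)) :
    ∃ h : Fin n → ℕ, ∀ i j, r i j → h j < h i := by
  classical
  have hT := hwf.transGen
  refine ⟨fun i => (Finset.univ.filter
    (fun j => Relation.TransGen (fun x y => r y x) j i)).card, ?_⟩
  intro i j hij
  apply Finset.card_lt_card
  rw [Finset.ssubset_iff_of_subset]
  · refine ⟨j, Finset.mem_filter.2 ⟨Finset.mem_univ _, Relation.TransGen.single hij⟩, ?_⟩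
    simp only [Finset.mem_filter, Finset.mem_univ, true_and]
    intro h
    exact hT.asymmetric _ _ h h
  · intro k hk
    simp only [Finset.mem_filter, Finset.mem_univ, true_and] at hk ⊢
    exact hk.tail hij

/-- If for z > 0 a feasible normalized positive vector v has an acyclic
binding-constraint digraph D(v,z), then there exists a feasible vector v'
for which all the constraints hold strictly. -/
theorem acyclic_binding_digraph_implies_strict_solution (n : ℕ) (hn : 0 < n)
    (A : Fin n → Fin n → ℝ) (hpos : ∀ i j, 0 < A i j)
    (hrec : ∀ i j, A i j * A j i = 1)
    (z : ℝ) (hz : 0 < z)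
    (v : Fin n → ℝ) (hv : ∀ j, 0 < v j) (hv1 : v ⟨0, hn⟩ = 1)
    (hfeas : ∀ i j : Fin n, i ≠ j →
      max (A i j - z) (1 / (A j i + z)) * v j ≤ v i)
    (hacyclic : ∀ (s : ℕ), 2 ≤ s → ∀ [NeZero s], ∀ c : Fin s → Fin n,
      Function.Injective c →
      ¬ ∀ k : Fin s, v (c k) =
          max (A (c k) (c (k + 1)) - z) (1 / (A (c (k + 1)) (c k) + z)) * v (c (k + 1))) :
    ∃ v' : Fin n → ℝ, (∀ j, 0 < v' j) ∧ v' ⟨0, hn⟩ = 1 ∧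
      ∀ i j : Fin n, i ≠ j →
        max (A i j - z) (1 / (A j i + z)) * v' j < v' i := by
  obtain ⟨h, hh⟩ := aux_height (fun i j => i ≠ j ∧ v i =
      max (A i j - z) (1 / (A j i + z)) * v j)
    (aux_wf _ (fun i hi => hi.1 rfl) (fun s hs _ c hc hk =>
      hacyclic s hs c hc (fun k => (hk k).2)))
  have hev : ∀ i j : Fin n, ∀ᶠ ε in nhdsWithin (0 : ℝ) (Set.Ioi 0), i ≠ j →
      max (A i j - z) (1 / (A j i + z)) * (v j * (1 + ε * h j)) < v i * (1 + ε * h i) := by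
    intro i j
    by_cases hij : i = j
    · exact Filter.Eventually.of_forall (fun _ hne => absurd hij hne)
    rcases (hfeas i j hij).lt_or_eq with hlt | heq
    · have : ∀ᶠ ε in nhds (0 : ℝ),
          max (A i j - z) (1 / (A j i + z)) * (v j * (1 + ε * h j)) < v i * (1 + ε * h i) := by
        apply ContinuousAt.eventually_lt
        · fun_prop
        · fun_prop
        · simpa using hlt
      filter_upwards [nhdsWithin_le_nhds this] with ε hε _ using hε
    · filter_upwards [self_mem_nhdsWithin] with ε hε _
      have h1 : (h j : ℝ) < h i := by exact_mod_cast hh i j ⟨hij, heq.symm⟩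
      rw [← mul_assoc, heq]
      have hε' : (0 : ℝ) < ε := hε
      have := hv i
      gcongr
  have hall := Filter.eventually_all.2 (fun i => Filter.eventually_all.2 (hev i))
  obtain ⟨ε, hε, hε0⟩ := (hall.and self_mem_nhdsWithin).exists
  have hε' : (0 : ℝ) < ε := hε0
  have hw : ∀ j, 0 < v j * (1 + ε * h j) := fun j => mul_pos (hv j) (by positivity)
  refine ⟨fun j => v j * (1 + ε * h j) / (v ⟨0, hn⟩ * (1 + ε * h ⟨0, hn⟩)),
    fun j => div_pos (hw j) (hw _), div_self (hw _).ne', fun i j hij => ?_⟩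
  rw [← mul_div_assoc]
  exact div_lt_div_of_pos_right (hε i j hij) (hw _)
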